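/- arXiv:math/9908137 — 4 statements merged into one kernel-verified Lean document; each statement's English description precedes it below -/
import Mathlib

section
/- Let $(G_k)_{k\ge 1}$ be an increasing chain of groups with union $G_\infty = \bigcup_k G_k$. Suppose for each $k$ a continuous irreducible unitary representation $(R_k,\mathcal H_k)$ of $G_k$ on a complex Hilbert space $\mathcal H_k$ is given, together with injective continuous linear embeddings $i_{k+1}^k\colon \mathcal H_k\to\mathcal H_{k+1}$ satisfying $i_{k+1}^k\circ R_k(g)=R_{k+1}(g)\circ i_{k+1}^k$ for all $g\in G_k$. Let $\mathcal H_\infty$ be the Hilbert-space completion of the inductive limit $\bigcup_k \mathcal H_k$ and let $R_\infty$ be the unique continuous unitary representation of $G_\infty$ on $\mathcal H_\infty$ with $R_\infty(g)x = R_k(g)x$ whenever $g\in G_k$ and $x\in\mathcal H_k$. Then $R_\infty$ is irreducible; equivalently, every bounded operator $A$ on $\mathcal H_\infty$ commuting with all $R_\infty(g)$, $g\in G_\infty$, is a scalar multiple of the identity. -/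
/-!
Statement 0: If `G_∞ = ⋃ₖ G_k` and `(R_k, 𝓗_k)` are irreducible unitary representations of the
`G_k` linked by injective continuous intertwining embeddings `i_{k+1}^k`, and `R_∞` is the
induced unitary representation of `G_∞` on the Hilbert-space completion `𝓗_∞` of the inductive
limit of the `𝓗_k`, then `R_∞` is irreducible: every bounded operator commuting with all
`R_∞(g)` is a scalar multiple of the identity.
-/

open scoped InnerProductSpace

/-!
Let `A` commute with `R_∞`. Since `R_k` and `R_∞` are unitary, `j_k† A j_k` commutes with `R_k`,
so it is a scalar by irreducibility; for `A = 1` the same argument shows that `j_k` is a multiple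
of an isometry. Hence the compression of `A` to the range of `j_k` is a scalar `c_k`. Compressing
further to a smaller nonzero range does not change the scalar, so the `c_k` agree, and the matrix
coefficients of `A` are those of a scalar on a dense subspace.
-/

/-- The family of operators `S` is irreducible in the sense of Schur's lemma: its commutant
consists of scalars. The family carries no algebraic structure, so it may be the restriction of a
representation to an arbitrary set of group elements. -/
def HasScalarCommutant {𝕜 E ι : Type*} [CommSemiring 𝕜] [AddCommMonoid E] [TopologicalSpace E]
    [Module 𝕜 E] [ContinuousConstSMul 𝕜 E] (S : ι → E →L[𝕜] E) : Prop :=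
  ∀ A : E →L[𝕜] E, (∀ g, Commute A (S g)) → ∃ c : 𝕜, A = c • 1

/-- The compression of `A` to the subspace `V` is multiplication by `c`. This is phrased through
matrix coefficients, since `V` need not be closed and so need not have an orthogonal projection. -/
def CompressesToScalar {𝕜 E : Type*} [RCLike 𝕜] [NormedAddCommGroup E] [InnerProductSpace 𝕜 E]
    (A : E →L[𝕜] E) (V : Submodule 𝕜 E) (c : 𝕜) : Prop :=
  ∀ v ∈ V, ∀ w ∈ V, ⟪v, A w⟫_𝕜 = c * ⟪v, w⟫_𝕜

namespace CompressesToScalar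

variable {𝕜 E : Type*} [RCLike 𝕜] [NormedAddCommGroup E] [InnerProductSpace 𝕜 E]
  {A : E →L[𝕜] E} {V W : Submodule 𝕜 E} {c d : 𝕜}

theorem mono (hVW : V ≤ W) (h : CompressesToScalar A W c) : CompressesToScalar A V c :=
  fun v hv w hw => h v (hVW hv) w (hVW hw)

theorem bot (c : 𝕜) : CompressesToScalar A ⊥ c := by
  rintro v hv w -
  simp [(Submodule.mem_bot 𝕜).1 hv]

theorem unique (hV : V ≠ ⊥) (hc : CompressesToScalar A V c) (hd : CompressesToScalar A V d) :
    c = d := by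
  obtain ⟨v, hv, hv0⟩ := Submodule.exists_mem_ne_zero_of_ne_bot hV
  exact mul_right_cancel₀ (inner_self_ne_zero.2 hv0) ((hc v hv v hv).symm.trans (hd v hv v hv))

theorem eq_smul_one (hV : Dense (V : Set E)) (h : CompressesToScalar A V c) : A = c • 1 := by
  refine ContinuousLinearMap.ext_on (hV.mono Submodule.subset_span) fun w hw => ?_
  refine hV.eq_of_inner_right (𝕜 := 𝕜) fun v hv => ?_
  simpa [inner_smul_right] using h v hv w hw

theorem iSup_of_directed {κ : Type*} {V : κ → Submodule 𝕜 E}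
    (hV : Directed (· ≤ ·) V) (h : ∀ k, CompressesToScalar A (V k) c) :
    CompressesToScalar A (⨆ k, V k) c := by
  cases isEmpty_or_nonempty κ
  · simpa only [iSup_of_empty] using bot c
  intro v hv w hw
  obtain ⟨k, hk⟩ := (Submodule.mem_iSup_of_directed V hV).1 hv
  obtain ⟨l, hl⟩ := (Submodule.mem_iSup_of_directed V hV).1 hw
  obtain ⟨m, hkm, hlm⟩ := hV k l
  exact h m v (hkm hk) w (hlm hl)

theorem exists_forall_of_directed {κ : Type*} {V : κ → Submodule 𝕜 E}
    (hV : Directed (· ≤ ·) V) (h : ∀ k, ∃ c : 𝕜, CompressesToScalar A (V k) c) :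
    ∃ c : 𝕜, ∀ k, CompressesToScalar A (V k) c := by
  by_cases hbot : ∀ k, V k = ⊥
  · exact ⟨0, fun k => hbot k ▸ bot 0⟩
  obtain ⟨k₀, hk₀⟩ := not_forall.1 hbot
  obtain ⟨c, hc⟩ := h k₀
  refine ⟨c, fun k => ?_⟩
  obtain ⟨m, hkm, hk₀m⟩ := hV k k₀
  obtain ⟨d, hd⟩ := h m
  have hdc : d = c := unique hk₀ (hd.mono hk₀m) hc
  exact hdc ▸ hd.mono hkm

end CompressesToScalar

theorem commute_comp_comp_of_intertwines {𝕜 H E : Type*} [Semiring 𝕜] [AddCommMonoid H]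
    [TopologicalSpace H] [Module 𝕜 H] [AddCommMonoid E] [TopologicalSpace E] [Module 𝕜 E]
    {T : H →L[𝕜] H} {U A : E →L[𝕜] E} {j : H →L[𝕜] E} {p : E →L[𝕜] H}
    (hj : U ∘L j = j ∘L T) (hp : p ∘L U = T ∘L p) (hA : Commute A U) : Commute (p ∘L A ∘L j) T :=
  calc p ∘L A ∘L (j ∘L T)
      = p ∘L (A ∘L U) ∘L j := by rw [← hj]; rfl
    _ = (p ∘L U) ∘L A ∘L j := by rw [show A ∘L U = U ∘L A from hA]; rfl
    _ = T ∘L p ∘L A ∘L j := by rw [hp]; rfl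

section Intertwiners

open ContinuousLinearMap

variable {𝕜 H E ι : Type*} [RCLike 𝕜] [NormedAddCommGroup H] [InnerProductSpace 𝕜 H]
  [CompleteSpace H] [NormedAddCommGroup E] [InnerProductSpace 𝕜 E] [CompleteSpace E]

theorem adjoint_comp_eq_comp_adjoint_of_intertwines
    {T : H →L[𝕜] H} {U : E →L[𝕜] E} {j : H →L[𝕜] E}
    (hT : ∀ x y, ⟪T x, T y⟫_𝕜 = ⟪x, y⟫_𝕜) (hT_surj : Function.Surjective T)
    (hU : ∀ v w, ⟪U v, U w⟫_𝕜 = ⟪v, w⟫_𝕜) (hj : U ∘L j = j ∘L T) :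
    adjoint j ∘L U = T ∘L adjoint j := by
  ext v
  refine ext_inner_left 𝕜 fun y => ?_
  obtain ⟨x, rfl⟩ := hT_surj y
  have hjx : j (T x) = U (j x) := (DFunLike.congr_fun hj x).symm
  calc ⟪T x, adjoint j (U v)⟫_𝕜
      = ⟪U (j x), U v⟫_𝕜 := by rw [adjoint_inner_right, hjx]
    _ = ⟪x, adjoint j v⟫_𝕜 := by rw [hU, adjoint_inner_right]
    _ = ⟪T x, T (adjoint j v)⟫_𝕜 := (hT _ _).symm

theorem HasScalarCommutant.exists_compressesToScalar_range
    {R : ι → H →L[𝕜] H} {S : ι → E →L[𝕜] E} {j : H →L[𝕜] E} {A : E →L[𝕜] E}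
    (hR : HasScalarCommutant R) (hj : ∀ g, S g ∘L j = j ∘L R g)
    (hj_adjoint : ∀ g, adjoint j ∘L S g = R g ∘L adjoint j) (hA : ∀ g, Commute A (S g)) :
    ∃ c : 𝕜, CompressesToScalar A j.range c := by
  have exists_inner_eq (B : E →L[𝕜] E) (hB : ∀ g, Commute B (S g)) :
      ∃ c : 𝕜, ∀ x y, ⟪j x, B (j y)⟫_𝕜 = c * ⟪x, y⟫_𝕜 := by
    obtain ⟨c, hc⟩ := hR (adjoint j ∘L B ∘L j) fun g =>
      commute_comp_comp_of_intertwines (hj g) (hj_adjoint g) (hB g)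
    refine ⟨c, fun x y => ?_⟩
    have hy : adjoint j (B (j y)) = c • y := DFunLike.congr_fun hc y
    rw [← adjoint_inner_right, hy, inner_smul_right]
  obtain ⟨c, hc⟩ := exists_inner_eq A hA
  obtain ⟨d, hd⟩ : ∃ d : 𝕜, ∀ x y, ⟪j x, j y⟫_𝕜 = d * ⟪x, y⟫_𝕜 :=
    exists_inner_eq 1 fun g => Commute.one_left (S g)
  by_cases hd0 : d = 0
  · have hj0 (x : H) : j x = 0 := by
      rw [← inner_self_eq_zero (𝕜 := 𝕜), hd, hd0, zero_mul]
    refine ⟨0, ?_⟩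
    rintro _ ⟨x, rfl⟩ _ ⟨y, rfl⟩
    simp [hj0]
  · refine ⟨c / d, ?_⟩
    rintro _ ⟨x, rfl⟩ _ ⟨y, rfl⟩
    change ⟪j x, A (j y)⟫_𝕜 = c / d * ⟪j x, j y⟫_𝕜
    rw [hc, hd, ← mul_assoc, div_mul_cancel₀ c hd0]

end Intertwiners

theorem inductive_limit_irreducible_general {𝕜 κ G E : Type*} [RCLike 𝕜] {H : κ → Type*}
    [∀ k, NormedAddCommGroup (H k)] [∀ k, InnerProductSpace 𝕜 (H k)] [∀ k, CompleteSpace (H k)]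
    [NormedAddCommGroup E] [InnerProductSpace 𝕜 E] [CompleteSpace E]
    {Γ : κ → Set G} {R : ∀ k, Γ k → H k →L[𝕜] H k} {S : G → E →L[𝕜] E} {j : ∀ k, H k →L[𝕜] E}
    (hR_inner : ∀ k g x y, ⟪R k g x, R k g y⟫_𝕜 = ⟪x, y⟫_𝕜)
    (hR_surj : ∀ k g, Function.Surjective (R k g))
    (hR_irred : ∀ k, HasScalarCommutant (R k))
    (hS_inner : ∀ k, ∀ g ∈ Γ k, ∀ v w, ⟪S g v, S g w⟫_𝕜 = ⟪v, w⟫_𝕜)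
    (hj : ∀ k (g : Γ k) (x : H k), S g (j k x) = j k (R k g x))
    (hj_directed : Directed (· ≤ ·) fun k => (j k).range)
    (hj_dense : Dense (⋃ k, Set.range (j k))) :
    HasScalarCommutant S := by
  intro A hA
  have hj_comp (k) (g : Γ k) : S g ∘L j k = j k ∘L R k g := ContinuousLinearMap.ext (hj k g)
  have hA_range (k) : ∃ c : 𝕜, CompressesToScalar A (j k).range c :=
    (hR_irred k).exists_compressesToScalar_range (hj_comp k)
      (fun g => adjoint_comp_eq_comp_adjoint_of_intertwines (hR_inner k g) (hR_surj k g)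
        (hS_inner k g g.2) (hj_comp k g))
      fun g => hA g
  obtain ⟨c, hc⟩ := CompressesToScalar.exists_forall_of_directed hj_directed hA_range
  have iSup_range_dense : Dense ((⨆ k, (j k).range : Submodule 𝕜 E) : Set E) :=
    hj_dense.mono (Set.iUnion_subset (le_iSup fun k => (j k).range))
  exact ⟨c, (CompressesToScalar.iSup_of_directed hj_directed hc).eq_smul_one iSup_range_dense⟩

theorem monotone_range_of_comp_eq {𝕜 E : Type*} [Semiring 𝕜] [AddCommMonoid E]
    [TopologicalSpace E] [Module 𝕜 E] {H : ℕ → Type*} [∀ k, AddCommMonoid (H k)]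
    [∀ k, TopologicalSpace (H k)] [∀ k, Module 𝕜 (H k)] {i : ∀ k, H k →L[𝕜] H (k + 1)}
    {j : ∀ k, H k →L[𝕜] E} (hj : ∀ k, j (k + 1) ∘L i k = j k) :
    Monotone fun k => (j k).range := by
  refine monotone_nat_of_le_succ fun k => ?_
  rintro _ ⟨x, rfl⟩
  exact ⟨i k x, DFunLike.congr_fun (hj k) x⟩

theorem inductive_limit_irreducible
    {G : Type*} [Group G] (Gc : ℕ → Subgroup G)
    (hmono : Monotone Gc) (hunion : ∀ g : G, ∃ k, g ∈ Gc k)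
    (𝓗 : ℕ → Type*) [∀ k, NormedAddCommGroup (𝓗 k)] [∀ k, InnerProductSpace ℂ (𝓗 k)]
    [∀ k, CompleteSpace (𝓗 k)]
    -- the representations `R_k` of the groups `G_k` on the Hilbert spaces `𝓗_k`
    (R : ∀ k : ℕ, G → 𝓗 k →L[ℂ] 𝓗 k)
    (hR_one : ∀ k, R k 1 = 1)
    (hR_mul : ∀ k, ∀ g ∈ Gc k, ∀ g' ∈ Gc k, R k (g * g') = (R k g).comp (R k g'))
    (hR_unitary : ∀ k, ∀ g ∈ Gc k, ∀ x y : 𝓗 k, ⟪R k g x, R k g y⟫_ℂ = ⟪x, y⟫_ℂ)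
    (hR_surj : ∀ k, ∀ g ∈ Gc k, Function.Surjective (R k g))
    -- each `R_k` is irreducible: its commutant consists of scalars
    (hR_irred : ∀ k, ∀ A : 𝓗 k →L[ℂ] 𝓗 k,
      (∀ g ∈ Gc k, A.comp (R k g) = (R k g).comp A) →
      ∃ c : ℂ, A = c • ContinuousLinearMap.id ℂ (𝓗 k))
    -- the injective continuous linear embeddings `i_{k+1}^k`, intertwining the actions
    (i : ∀ k : ℕ, 𝓗 k →L[ℂ] 𝓗 (k + 1))
    (hi_inj : ∀ k, Function.Injective (i k))
    (hi_intertwine : ∀ k, ∀ g ∈ Gc k, (i k).comp (R k g) = (R (k + 1) g).comp (i k))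
    -- `𝓗_∞`, the Hilbert-space completion of the inductive limit of the `𝓗_k`
    {Einf : Type*} [NormedAddCommGroup Einf] [InnerProductSpace ℂ Einf] [CompleteSpace Einf]
    (j : ∀ k : ℕ, 𝓗 k →L[ℂ] Einf)
    (hj_compat : ∀ k, (j (k + 1)).comp (i k) = j k)
    (hj_inj : ∀ k, Function.Injective (j k))
    (hj_dense : Dense (⋃ k, Set.range (j k)))
    -- the induced unitary representation `R_∞` of `G_∞` on `𝓗_∞`
    (Rinf : G → Einf →L[ℂ] Einf)
    (hRinf_one : Rinf 1 = 1)
    (hRinf_mul : ∀ g g' : G, Rinf (g * g') = (Rinf g).comp (Rinf g'))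
    (hRinf_unitary : ∀ (g : G) (x y : Einf), ⟪Rinf g x, Rinf g y⟫_ℂ = ⟪x, y⟫_ℂ)
    (hRinf_surj : ∀ g : G, Function.Surjective (Rinf g))
    (hRinf_compat : ∀ k, ∀ g ∈ Gc k, ∀ x : 𝓗 k, Rinf g (j k x) = j k (R k g x)) :
    -- conclusion: `R_∞` is irreducible, i.e. its commutant consists of scalars
    ∀ A : Einf →L[ℂ] Einf, (∀ g : G, A.comp (Rinf g) = (Rinf g).comp A) →
      ∃ c : ℂ, A = c • ContinuousLinearMap.id ℂ Einf := by
  exact inductive_limit_irreducible_general (Γ := fun k => (Gc k : Set G)) (R := fun k g => R k g)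
    (fun k g => hR_unitary k g g.2) (fun k g => hR_surj k g g.2)
    (fun k B hB => hR_irred k B fun g hg => hB ⟨g, hg⟩) (fun _ g _ => hRinf_unitary g)
    (fun k g => hRinf_compat k g g.2) (monotone_range_of_comp_eq hj_compat).directed_le hj_dense
end

section
/- For polynomial functions $p,q$ on $\mathbb{C}^{n\times k}$, the Gaussian integral inner product equals the Fischer inner product: $\int_{\mathbb{C}^{n\times k}} p(Z)\overline{q(Z)}\,d\mu(Z) \;=\; p(D)\,\overline{q(\bar Z)}\big|_{Z=0}$, where $\mu$ is the Gaussian measure $d\mu(Z)=\pi^{-nk}\exp[-\mathrm{Tr}(ZZ^{\dagger})]\,dZ$ and $p(D)$ denotes the differential operator obtained from $p$ by replacing each variable $Z_{\alpha j}$ by the partial derivative $\partial/\partial Z_{\alpha j}$ ($1\le\alpha\le n$, $1\le j\le k$). -/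
/-!
Statement 4: For polynomials `p, q` on `ℂ^{n×k}`, the Gaussian inner product equals the Fischer
inner product: `∫ p(Z) conj(q(Z)) dμ(Z) = p(D) conj(q(conj Z)) |_{Z=0}`.
-/

open MeasureTheory Matrix
open scoped ComplexConjugate

noncomputable section

/-- The Gaussian measure `dμ(Z) = π^{-nk} exp(-Tr(Z Z†)) dZ` on `ℂ^{n×k}`. -/
def gaussianMeasure (n k : ℕ) : Measure (Fin n → Fin k → ℂ) :=
  volume.withDensity fun Z =>
    ENNReal.ofReal ((Real.pi ^ (n * k))⁻¹ *
      Real.exp (-(Matrix.trace (Matrix.of Z * (Matrix.of Z)ᴴ)).re))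

/-- The constant-coefficient differential operator `p(D)` applied to the polynomial `q`:
each variable of `p` is replaced by the corresponding partial derivative. -/
def polyDop {ι : Type*} [Fintype ι] [DecidableEq ι] (p q : MvPolynomial ι ℂ) :
    MvPolynomial ι ℂ :=
  ∑ r ∈ p.support, p.coeff r •
    Finset.univ.toList.foldr (fun i q' => (⇑(MvPolynomial.pderiv (R := ℂ) i))^[r i] q') q

/-!
The Gaussian measure is a product of copies of the standard complex Gaussian, so the inner product
of two monomials factors into the moments `∫ zᵃ z̄ᵇ`. These vanish for `a ≠ b` by rotation
invariance, and for `a = b` polar coordinates give `Γ(a + 1) = a!`. The same numbers come from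
differentiation, since `∂ʳ zˢ` at `0` is `r!` or `0` according as `r = s` or not, and both sides
are bilinear in `p` and `q̄`.
-/

theorem lintegral_fin_prod_eq_prod {n : ℕ} {E : Fin n → Type*} {mE : ∀ i, MeasurableSpace (E i)}
    {μ : ∀ i, Measure (E i)} [∀ i, SigmaFinite (μ i)] {f : ∀ i, E i → ENNReal}
    (hf : ∀ i, Measurable (f i)) :
    ∫⁻ x, ∏ i, f i (x i) ∂Measure.pi μ = ∏ i, ∫⁻ x, f i x ∂μ i := by
  induction n with
  | zero => simp
  | succ n ih =>
    have htail : Measurable fun x : ∀ i : Fin n, E i.succ => ∏ i, f i.succ (x i) := by fun_prop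
    rw [← (measurePreserving_piFinSuccAbove μ 0).symm.lintegral_comp_emb
      (MeasurableEquiv.measurableEmbedding _), Fin.prod_univ_succ, ← ih fun i => hf i.succ,
      ← lintegral_prod_mul (hf 0).aemeasurable htail.aemeasurable]
    simp_rw [Fin.prod_univ_succ]
    rfl

section FiniteProducts

variable {ι : Type*} [Fintype ι] {E : ι → Type*} {mE : ∀ i, MeasurableSpace (E i)}
  {μ : ∀ i, Measure (E i)} [∀ i, SigmaFinite (μ i)] {f : ∀ i, E i → ENNReal}

theorem lintegral_fintype_prod_eq_prod (hf : ∀ i, Measurable (f i)) :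
    ∫⁻ x, ∏ i, f i (x i) ∂Measure.pi μ = ∏ i, ∫⁻ x, f i x ∂μ i := by
  let e := (Fintype.equivFin ι).symm
  rw [← (measurePreserving_piCongrLeft μ e).lintegral_comp_emb
    (MeasurableEquiv.measurableEmbedding _)]
  simp_rw [← e.prod_comp, MeasurableEquiv.coe_piCongrLeft, Equiv.piCongrLeft_apply_apply]
  exact lintegral_fin_prod_eq_prod fun i => hf (e i)

theorem pi_withDensity [∀ i, SigmaFinite ((μ i).withDensity (f i))] (hf : ∀ i, Measurable (f i)) :
    Measure.pi (fun i => (μ i).withDensity (f i)) =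
      (Measure.pi μ).withDensity fun x => ∏ i, f i (x i) := by
  refine Measure.pi_eq fun s hs => ?_
  rw [withDensity_apply _ (.univ_pi hs), Measure.restrict_pi_pi,
    lintegral_fintype_prod_eq_prod hf]
  exact Finset.prod_congr rfl fun i _ => (withDensity_apply _ (hs i)).symm

end FiniteProducts

theorem measurePreserving_withDensity_comp {α β : Type*} [MeasurableSpace α] [MeasurableSpace β]
    {μ : Measure α} {ν : Measure β} {g : α → β} (hg : MeasurePreserving g μ ν) {f : β → ENNReal}
    (hf : Measurable f) :
    MeasurePreserving g (μ.withDensity fun x => f (g x)) (ν.withDensity f) := by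
  refine ⟨hg.measurable, Measure.ext fun s hs => ?_⟩
  rw [Measure.map_apply hg.measurable hs, withDensity_apply _ (hg.measurable hs),
    withDensity_apply _ hs, hg.setLIntegral_comp_preimage hs hf]

theorem coeff_iterate_pderiv {ι R : Type*} [CommSemiring R] (i : ι) (a : ℕ)
    (f : MvPolynomial ι R) (m : ι →₀ ℕ) :
    ((MvPolynomial.pderiv i)^[a] f).coeff m =
      f.coeff (m + Finsupp.single i a) * ((m i + 1).ascFactorial a : ℕ) := by
  induction a generalizing f with
  | zero => simp
  | succ a ih =>
    rw [Function.iterate_succ_apply, ih, MvPolynomial.coeff_pderiv, Nat.ascFactorial_succ,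
      add_assoc, ← Finsupp.single_add]
    simp only [Finsupp.add_apply, Finsupp.single_eq_same]
    push_cast
    ring

theorem coeff_foldr_iterate_pderiv {ι R : Type*} [CommSemiring R] (r : ι → ℕ)
    (f : MvPolynomial ι R) {l : List ι} (hl : l.Nodup) (m : ι →₀ ℕ) :
    (l.foldr (fun i g => (MvPolynomial.pderiv i)^[r i] g) f).coeff m =
      f.coeff (m + (l.map fun i => Finsupp.single i (r i)).sum) *
        ((l.map fun i => (m i + 1).ascFactorial (r i)).prod : ℕ) := by
  induction l generalizing m with
  | nil => simp
  | cons i l ih =>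
    obtain ⟨hi, hl⟩ := List.nodup_cons.mp hl
    have hshift : l.map (fun j => ((m + Finsupp.single i (r i)) j + 1).ascFactorial (r j)) =
        l.map fun j => (m j + 1).ascFactorial (r j) :=
      List.map_congr_left fun j hj => by
        rw [Finsupp.add_apply, Finsupp.single_eq_of_ne (ne_of_mem_of_not_mem hj hi), add_zero]
    rw [List.foldr_cons, coeff_iterate_pderiv, ih hl, hshift, List.map_cons, List.map_cons,
      List.sum_cons, List.prod_cons, add_assoc]
    push_cast
    ring

theorem constantCoeff_polyDop {ι : Type*} [Fintype ι] [DecidableEq ι] (p q : MvPolynomial ι ℂ) :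
    MvPolynomial.constantCoeff (polyDop p q) =
      ∑ r ∈ p.support, p.coeff r * q.coeff r * ∏ i, ((r i).factorial : ℂ) := by
  rw [polyDop, map_sum]
  refine Finset.sum_congr rfl fun r _ => ?_
  rw [MvPolynomial.constantCoeff_eq, MvPolynomial.coeff_smul, smul_eq_mul,
    coeff_foldr_iterate_pderiv r q Finset.univ.nodup_toList, zero_add, Finset.sum_map_toList,
    Finset.prod_map_toList, Finsupp.univ_sum_single, ← mul_assoc]
  simp only [Finsupp.coe_zero, Pi.zero_apply, zero_add, Nat.one_ascFactorial, Nat.cast_prod]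

theorem exists_circle_pow_mul_conj_pow_eq_neg_one {a b : ℕ} (hab : a ≠ b) :
    ∃ c : Circle, (c : ℂ) ^ a * conj (c : ℂ) ^ b = -1 := by
  have hsub : (a : ℂ) - b ≠ 0 := sub_ne_zero.mpr (Nat.cast_injective.ne hab)
  refine ⟨Circle.exp (Real.pi / (a - b)), ?_⟩
  rw [← Circle.coe_inv_eq_conj, ← Circle.exp_neg, Circle.coe_exp, Circle.coe_exp,
    ← Complex.exp_nat_mul, ← Complex.exp_nat_mul, ← Complex.exp_add, ← Complex.exp_pi_mul_I]
  congr 1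
  push_cast
  field_simp
  ring

theorem integral_pow_mul_conj_pow_eq_zero {μ : Measure ℂ}
    (hμ : ∀ c : Circle, MeasurePreserving (rotation c) μ μ) {a b : ℕ} (hab : a ≠ b) :
    ∫ z, z ^ a * conj z ^ b ∂μ = 0 := by
  obtain ⟨c, hc⟩ := exists_circle_pow_mul_conj_pow_eq_neg_one hab
  refine self_eq_neg.mp ?_
  calc ∫ z, z ^ a * conj z ^ b ∂μ
      = ∫ z, rotation c z ^ a * conj (rotation c z) ^ b ∂μ :=
        ((hμ c).integral_comp (rotation c).toHomeomorph.measurableEmbedding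
          fun z => z ^ a * conj z ^ b).symm
    _ = ∫ z, -(z ^ a * conj z ^ b) ∂μ := by
        congr with z
        rw [rotation_apply, map_mul]
        linear_combination z ^ a * conj z ^ b * hc
    _ = -∫ z, z ^ a * conj z ^ b ∂μ := integral_neg _

/-- The standard Gaussian probability measure `π⁻¹ exp(-|z|²) dz` on `ℂ`, normalised so that
`|z|²` has mean `1`. Its products are the measures of the Fischer inner product. -/
def stdComplexGaussian : Measure ℂ :=
  volume.withDensity fun z => ENNReal.ofReal (Real.pi⁻¹ * Real.exp (-‖z‖ ^ 2))

theorem integral_norm_pow_stdComplexGaussian (d : ℕ) :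
    ∫ z, ‖z‖ ^ d ∂stdComplexGaussian = Real.Gamma (d / 2 + 1) := by
  have hd : (-2 : ℝ) < d := by linarith [d.cast_nonneg (α := ℝ)]
  have hpolar : ∫ z : ℂ, ‖z‖ ^ d * Real.exp (-‖z‖ ^ 2) = Real.pi * Real.Gamma (d / 2 + 1) := by
    have h := Complex.integral_rpow_mul_exp_neg_rpow one_le_two hd
    rw [mul_div_cancel_left₀ _ two_ne_zero, add_div, div_self two_ne_zero] at h
    exact_mod_cast h
  have hdensity (z : ℂ) : (ENNReal.ofReal (Real.pi⁻¹ * Real.exp (-‖z‖ ^ 2))).toReal • ‖z‖ ^ d =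
      Real.pi⁻¹ * (‖z‖ ^ d * Real.exp (-‖z‖ ^ 2)) := by
    rw [ENNReal.toReal_ofReal (by positivity), smul_eq_mul]
    ring
  rw [stdComplexGaussian, integral_withDensity_eq_integral_toReal_smul (by fun_prop)
    (.of_forall fun _ => ENNReal.ofReal_lt_top)]
  simp_rw [hdensity]
  rw [integral_const_mul, hpolar, inv_mul_cancel_left₀ Real.pi_ne_zero]

instance : IsProbabilityMeasure stdComplexGaussian := by
  rw [isProbabilityMeasure_iff_real]
  simpa using integral_norm_pow_stdComplexGaussian 0

theorem integrable_norm_pow_stdComplexGaussian (d : ℕ) :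
    Integrable (fun z => ‖z‖ ^ d) stdComplexGaussian := by
  -- A nonzero Bochner integral is the integral of an integrable function.
  refine not_imp_comm.mp integral_undef ?_
  rw [integral_norm_pow_stdComplexGaussian]
  exact (Real.Gamma_pos_of_pos (by positivity)).ne'

theorem integrable_pow_mul_conj_pow_stdComplexGaussian (a b : ℕ) :
    Integrable (fun z => z ^ a * conj z ^ b) stdComplexGaussian := by
  refine (integrable_norm_pow_stdComplexGaussian (a + b)).mono'
    (Continuous.aestronglyMeasurable (by fun_prop)) (.of_forall fun z => le_of_eq ?_)
  rw [norm_mul, norm_pow, norm_pow, RCLike.norm_conj, pow_add]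

theorem measurePreserving_stdComplexGaussian (e : ℂ ≃ₗᵢ[ℝ] ℂ) :
    MeasurePreserving e stdComplexGaussian stdComplexGaussian := by
  simpa only [stdComplexGaussian, e.norm_map] using
    measurePreserving_withDensity_comp e.measurePreserving
      (f := fun z => ENNReal.ofReal (Real.pi⁻¹ * Real.exp (-‖z‖ ^ 2))) (by fun_prop)

theorem integral_pow_mul_conj_pow_stdComplexGaussian (a b : ℕ) :
    ∫ z, z ^ a * conj z ^ b ∂stdComplexGaussian = if a = b then (a.factorial : ℂ) else 0 := by
  split_ifs with hab
  · subst hab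
    have hnorm (z : ℂ) : z ^ a * conj z ^ a = ((‖z‖ ^ (2 * a) : ℝ) : ℂ) := by
      rw [← mul_pow, Complex.mul_conj', ← pow_mul, Complex.ofReal_pow]
    simp_rw [hnorm]
    rw [integral_complex_ofReal, integral_norm_pow_stdComplexGaussian, Nat.cast_mul, Nat.cast_two,
      mul_div_cancel_left₀ _ two_ne_zero, Real.Gamma_nat_eq_factorial, Complex.ofReal_natCast]
  · exact integral_pow_mul_conj_pow_eq_zero
      (fun c => measurePreserving_stdComplexGaussian (rotation c)) hab

section Monomials

variable {ι : Type*} [Fintype ι]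

theorem prod_pow_mul_conj_prod_pow {R : Type*} [CommSemiring R] [StarRing R] (r s : ι → ℕ)
    (z : ι → R) :
    (∏ i, z i ^ r i) * conj (∏ i, z i ^ s i) = ∏ i, z i ^ r i * conj (z i) ^ s i := by
  simp only [map_prod, map_pow, Finset.prod_mul_distrib]

theorem integrable_prod_pow_mul_conj_prod_pow (r s : ι → ℕ) :
    Integrable (fun z : ι → ℂ => (∏ i, z i ^ r i) * conj (∏ i, z i ^ s i))
      (Measure.pi fun _ => stdComplexGaussian) := by
  simp_rw [prod_pow_mul_conj_prod_pow]
  exact .fintype_prod (f := fun i (z : ℂ) => z ^ r i * conj z ^ s i)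
    fun i => integrable_pow_mul_conj_pow_stdComplexGaussian (r i) (s i)

theorem integral_prod_pow_mul_conj_prod_pow (r s : ι → ℕ) :
    ∫ z : ι → ℂ, (∏ i, z i ^ r i) * conj (∏ i, z i ^ s i)
        ∂Measure.pi (fun _ => stdComplexGaussian) =
      if r = s then ∏ i, ((r i).factorial : ℂ) else 0 := by
  simp_rw [prod_pow_mul_conj_prod_pow]
  rw [integral_fintype_prod_eq_prod fun i (z : ℂ) => z ^ r i * conj z ^ s i]
  simp_rw [integral_pow_mul_conj_pow_stdComplexGaussian, Finset.prod_ite_zero, Finset.mem_univ,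
    true_imp_iff, funext_iff]

theorem integral_eval_mul_conj_eval {𝕜 : Type*} [RCLike 𝕜] [MeasurableSpace 𝕜]
    {μ : Measure (ι → 𝕜)}
    (hμ : ∀ r s : ι →₀ ℕ, Integrable (fun z => (∏ i, z i ^ r i) * conj (∏ i, z i ^ s i)) μ)
    (p q : MvPolynomial ι 𝕜) :
    ∫ z, MvPolynomial.eval z p * conj (MvPolynomial.eval z q) ∂μ =
      ∑ r ∈ p.support, ∑ s ∈ q.support, p.coeff r * conj (q.coeff s) *
        ∫ z, (∏ i, z i ^ r i) * conj (∏ i, z i ^ s i) ∂μ := by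
  have hexpand (z : ι → 𝕜) : MvPolynomial.eval z p * conj (MvPolynomial.eval z q) =
      ∑ r ∈ p.support, ∑ s ∈ q.support, p.coeff r * conj (q.coeff s) *
        ((∏ i, z i ^ r i) * conj (∏ i, z i ^ s i)) := by
    rw [MvPolynomial.eval_eq', MvPolynomial.eval_eq', map_sum, Finset.sum_mul_sum]
    simp only [map_mul, mul_mul_mul_comm (p.coeff _)]
  simp_rw [hexpand]
  have hterm (r s : ι →₀ ℕ) := (hμ r s).const_mul (p.coeff r * conj (q.coeff s))
  rw [integral_finsetSum _ fun r _ => integrable_finsetSum _ fun s _ => hterm r s]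
  refine Finset.sum_congr rfl fun r _ => ?_
  rw [integral_finsetSum _ fun s _ => hterm r s]
  simp_rw [integral_const_mul]

end Monomials

theorem gaussian_inner_product_eq_fischer_general {ι : Type*} [Fintype ι] [DecidableEq ι]
    (p q : MvPolynomial ι ℂ) :
    ∫ z, MvPolynomial.eval z p * conj (MvPolynomial.eval z q)
        ∂Measure.pi (fun _ => stdComplexGaussian) =
      MvPolynomial.constantCoeff (polyDop p (MvPolynomial.map (starRingEnd ℂ) q)) := by
  rw [integral_eval_mul_conj_eval fun r s => integrable_prod_pow_mul_conj_prod_pow r s,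
    constantCoeff_polyDop]
  refine Finset.sum_congr rfl fun r _ => ?_
  simp_rw [integral_prod_pow_mul_conj_prod_pow, DFunLike.coe_fn_eq, mul_ite, mul_zero,
    MvPolynomial.coeff_map]
  rw [Finset.sum_ite_eq, ite_eq_left_iff]
  intro hr
  rw [MvPolynomial.notMem_support_iff.mp hr, map_zero, mul_zero, zero_mul]

theorem re_trace_mul_conjTranspose {ι κ : Type*} [Fintype ι] [Fintype κ] (Z : Matrix ι κ ℂ) :
    (Matrix.trace (Z * Zᴴ)).re = ∑ i, ∑ j, ‖Z i j‖ ^ 2 := by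
  simp only [Matrix.trace, Matrix.diag_apply, Matrix.mul_apply, Matrix.conjTranspose_apply,
    Complex.re_sum, RCLike.star_def, Complex.mul_conj']
  norm_cast

theorem gaussianMeasure_eq_pi_pi (n k : ℕ) :
    gaussianMeasure n k =
      Measure.pi fun _ : Fin n => Measure.pi fun _ : Fin k => stdComplexGaussian := by
  have hrow : Measure.pi (fun _ : Fin k => stdComplexGaussian) =
      (volume : Measure (Fin k → ℂ)).withDensity fun z =>
        ENNReal.ofReal (∏ j, Real.pi⁻¹ * Real.exp (-‖z j‖ ^ 2)) := by
    simp_rw [stdComplexGaussian]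
    rw [pi_withDensity fun _ => by fun_prop, volume_pi]
    congr with z
    exact (ENNReal.ofReal_prod_of_nonneg fun _ _ => by positivity).symm
  simp_rw [hrow]
  have hdensity (Z : Fin n → Fin k → ℂ) :
      (Real.pi ^ (n * k))⁻¹ * Real.exp (-(Matrix.trace (Matrix.of Z * (Matrix.of Z)ᴴ)).re) =
        ∏ i, ∏ j, Real.pi⁻¹ * Real.exp (-‖Z i j‖ ^ 2) := by
    rw [re_trace_mul_conjTranspose]
    simp [Finset.prod_mul_distrib, ← Real.exp_sum, pow_mul', Finset.sum_neg_distrib]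
  rw [pi_withDensity fun _ => by fun_prop, gaussianMeasure, volume_pi]
  congr with Z
  rw [hdensity, ENNReal.ofReal_prod_of_nonneg fun _ _ => by positivity]

theorem measurePreserving_curry_gaussianMeasure (n k : ℕ) :
    MeasurePreserving (MeasurableEquiv.curry (Fin n) (Fin k) ℂ)
      (Measure.pi fun _ => stdComplexGaussian) (gaussianMeasure n k) where
  measurable := MeasurableEquiv.measurable _
  map_eq := by
    rw [gaussianMeasure_eq_pi_pi]
    simp_rw [← Measure.infinitePi_eq_pi]
    exact Measure.infinitePi_map_curry fun _ _ => stdComplexGaussian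

theorem gaussian_inner_product_eq_fischer (n k : ℕ)
    (p q : MvPolynomial (Fin n × Fin k) ℂ) :
    ∫ Z, MvPolynomial.eval (fun v => Z v.1 v.2) p *
        conj (MvPolynomial.eval (fun v => Z v.1 v.2) q) ∂gaussianMeasure n k =
      MvPolynomial.constantCoeff (polyDop p (MvPolynomial.map (starRingEnd ℂ) q)) := by
  rw [← (measurePreserving_curry_gaussianMeasure n k).integral_comp']
  exact gaussian_inner_product_eq_fischer_general p q

end
end

section
/- Let $k\ge 1$, let $p_0(Z)=\sum_{i=1}^k Z_i^2$, and let $h\ne 0$ be a harmonic homogeneous polynomial of degree $r$ in $Z_1,\dots,Z_k$. Let $Jh$ be the linear span of $\{p_0^j h : j=0,1,2,\dots\}$, and let $X^{+}=\tfrac12 p_0$ (multiplication) and $X^{-}=\tfrac12\sum_i\partial^2/\partial Z_i^2$. Then the polynomials $p_0^j h$, $j\ge 0$, are linearly independent, $Jh$ is invariant under $X^{+}$ and $X^{-}$, and $Jh$ is irreducible under these operators: the only subspaces of $Jh$ invariant under both $X^{+}$ and $X^{-}$ are $\{0\}$ and $Jh$ itself. -/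
/-!
Statement 13: For `h ≠ 0` harmonic homogeneous of degree `r` in `Z₁,…,Z_k` (`k ≥ 1`), the
polynomials `p₀ʲ h` are linearly independent, their span `Jh` is invariant under
`X⁺ = ½ p₀` and `X⁻ = ½ Δ`, and `Jh` is irreducible under these operators.
-/

noncomputable section

/-- The polynomial `p₀(Z) = ∑ i, Z i ^ 2`. -/
def p0 (k : ℕ) : MvPolynomial (Fin k) ℂ :=
  ∑ i : Fin k, MvPolynomial.X i ^ 2

/-- The Laplacian `Δ = ∑ i, ∂²/∂Z i²`. -/
def lap (k : ℕ) (p : MvPolynomial (Fin k) ℂ) : MvPolynomial (Fin k) ℂ :=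
  ∑ i : Fin k, MvPolynomial.pderiv i (MvPolynomial.pderiv i p)

/-- The raising operator `X⁺ = ½ p₀` (multiplication). -/
def Xplus (k : ℕ) (p : MvPolynomial (Fin k) ℂ) : MvPolynomial (Fin k) ℂ :=
  ((1 : ℂ) / 2) • (p0 k * p)

/-- The lowering operator `X⁻ = ½ Δ`. -/
def Xminus (k : ℕ) (p : MvPolynomial (Fin k) ℂ) : MvPolynomial (Fin k) ℂ :=
  ((1 : ℂ) / 2) • lap k p

/-- `Jh`, the span of `{p₀ʲ h : j = 0, 1, 2, …}`. -/
def Jspan (k : ℕ) (h : MvPolynomial (Fin k) ℂ) : Submodule ℂ (MvPolynomial (Fin k) ℂ) :=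
  Submodule.span ℂ (Set.range fun j : ℕ => p0 k ^ j * h)

/-!
Put `E = ∑ i, Z i * ∂/∂Z i`. The operators `-(E + k/2)`, `-Δ/4` and multiplication by `p₀` form an
`sl₂`-triple, for which `h` is a primitive vector of weight `μ = -(r + k/2)`. It follows that
`X⁻ (p₀ʲ⁺¹ h) = (j + 1) (k + 2 r + 2 j) • p₀ʲ h`; the coefficient is `-2 (j + 1) (μ - j)`, which is
nonzero because `μ` is negative. Hence, on a combination of `h, …, p₀ⁿ h` whose last coefficient is
nonzero, the `n`-th power of `X⁻` leaves a nonzero multiple of `h`. So a vanishing combination is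
trivial, and every nonzero invariant subspace contains `h`, from which `X⁺` generates all of `Jh`.
-/

theorem apply_mem_span_range_of_forall {R M ι : Type*} [Semiring R] [AddCommMonoid M] [Module R M]
    {L : Module.End R M} {v : ι → M} (h : ∀ i, L (v i) ∈ Submodule.span R (Set.range v)) {x : M}
    (hx : x ∈ Submodule.span R (Set.range v)) : L x ∈ Submodule.span R (Set.range v) :=
  (Submodule.map_span_le L _ _).mpr (Set.forall_mem_range.mpr h) (Submodule.mem_map_of_mem hx)

/-- A sequence of vectors along which `L` descends: `L` kills the bottom vector `v 0` and sends
`v (n + 1)` to `c n • v n`. -/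
structure IsDescendingLadder {R M : Type*} [Semiring R] [AddCommMonoid M] [Module R M]
    (L : Module.End R M) (c : ℕ → R) (v : ℕ → M) : Prop where
  apply_zero : L (v 0) = 0
  apply_succ (n : ℕ) : L (v (n + 1)) = c n • v n

namespace IsDescendingLadder

section CommSemiring

variable {R M : Type*} [CommSemiring R] [AddCommMonoid M] [Module R M]
  {L : Module.End R M} {c : ℕ → R} {v : ℕ → M}

theorem pow_apply_self (hL : IsDescendingLadder L c v) (n : ℕ) :
    (L ^ n) (v n) = (∏ i ∈ Finset.range n, c i) • v 0 := by
  induction n with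
  | zero => simp
  | succ n ih =>
    rw [pow_succ, Module.End.mul_apply, hL.apply_succ, map_smul, ih, smul_smul,
      Finset.prod_range_succ_comm]

theorem pow_apply_of_lt (hL : IsDescendingLadder L c v) {j n : ℕ} (hjn : j < n) :
    (L ^ n) (v j) = 0 := by
  induction n generalizing j with
  | zero => omega
  | succ n ih =>
    rw [pow_succ, Module.End.mul_apply]
    cases j with
    | zero => rw [hL.apply_zero, map_zero]
    | succ j => rw [hL.apply_succ, map_smul, ih (by omega), smul_zero]

theorem pow_apply_linearCombination (hL : IsDescendingLadder L c v) {l : ℕ →₀ R} {n : ℕ}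
    (hl : ∀ j ∈ l.support, j ≤ n) :
    (L ^ n) (Finsupp.linearCombination R v l) = (l n * ∏ i ∈ Finset.range n, c i) • v 0 := by
  rw [Finsupp.linearCombination_apply, map_finsuppSum, Finsupp.sum, Finset.sum_eq_single n,
    map_smul, hL.pow_apply_self, smul_smul]
  · intro j hj hjn
    rw [map_smul, hL.pow_apply_of_lt (lt_of_le_of_ne (hl j hj) hjn), smul_zero]
  · intro hn
    rw [Finsupp.notMem_support_iff.mp hn, zero_smul, map_zero]

theorem exists_pow_apply_linearCombination [NoZeroDivisors R] [Nontrivial R]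
    (hL : IsDescendingLadder L c v) (hc : ∀ n, c n ≠ 0) {l : ℕ →₀ R} (hl : l ≠ 0) :
    ∃ (n : ℕ) (a : R), a ≠ 0 ∧ (L ^ n) (Finsupp.linearCombination R v l) = a • v 0 := by
  have hs : l.support.Nonempty := Finsupp.support_nonempty_iff.mpr hl
  have htop : l (l.support.max' hs) ≠ 0 := Finsupp.mem_support_iff.mp (l.support.max'_mem hs)
  exact ⟨_, _, mul_ne_zero htop (Finset.prod_ne_zero_iff.mpr fun i _ => hc i),
    hL.pow_apply_linearCombination fun j hj => l.support.le_max' j hj⟩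

theorem apply_mem_span (hL : IsDescendingLadder L c v) {x : M}
    (hx : x ∈ Submodule.span R (Set.range v)) : L x ∈ Submodule.span R (Set.range v) := by
  refine apply_mem_span_range_of_forall (fun n => ?_) hx
  cases n with
  | zero => exact hL.apply_zero ▸ Submodule.zero_mem _
  | succ n =>
    exact hL.apply_succ n ▸ Submodule.smul_mem _ _ (Submodule.subset_span (Set.mem_range_self n))

end CommSemiring

theorem linearIndependent {R M : Type*} [CommRing R] [IsDomain R] [AddCommGroup M] [Module R M]
    [Module.IsTorsionFree R M] {L : Module.End R M} {c : ℕ → R} {v : ℕ → M}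
    (hL : IsDescendingLadder L c v) (hc : ∀ n, c n ≠ 0) (hv : v 0 ≠ 0) :
    LinearIndependent R v := by
  refine linearIndependent_iff.mpr fun l hl0 => ?_
  by_contra hl
  obtain ⟨n, a, ha, h⟩ := hL.exists_pow_apply_linearCombination hc hl
  rw [hl0, map_zero] at h
  exact smul_ne_zero ha hv h.symm

section Field

variable {K M : Type*} [Field K] [AddCommGroup M] [Module K M]
  {L : Module.End K M} {c : ℕ → K} {v : ℕ → M} {S : Submodule K M}

theorem bottom_mem (hL : IsDescendingLadder L c v) (hc : ∀ n, c n ≠ 0)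
    (hS : S ≤ Submodule.span K (Set.range v)) (hS0 : S ≠ ⊥) (hLS : ∀ x ∈ S, L x ∈ S) :
    v 0 ∈ S := by
  obtain ⟨x, hx, hx0⟩ := S.exists_mem_ne_zero_of_ne_bot hS0
  obtain ⟨l, rfl⟩ : ∃ l, Finsupp.linearCombination K v l = x :=
    Finsupp.mem_span_range_iff_exists_finsupp.mp (hS hx)
  have hl : l ≠ 0 := fun hl => hx0 (by rw [hl, map_zero])
  obtain ⟨n, a, ha, h⟩ := hL.exists_pow_apply_linearCombination hc hl
  exact (S.smul_mem_iff ha).mp (h ▸ Module.End.pow_apply_mem_of_forall_mem n hLS _ hx)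

theorem eq_bot_or_eq_span (hL : IsDescendingLadder L c v) (hc : ∀ n, c n ≠ 0)
    {A : Module.End K M} {b : ℕ → K} (hb : ∀ n, b n ≠ 0) (hA : ∀ n, A (v n) = b n • v (n + 1))
    (hS : S ≤ Submodule.span K (Set.range v)) (hAS : ∀ x ∈ S, A x ∈ S) (hLS : ∀ x ∈ S, L x ∈ S) :
    S = ⊥ ∨ S = Submodule.span K (Set.range v) := by
  refine or_iff_not_imp_left.mpr fun hS0 => hS.antisymm ?_
  refine Submodule.span_le.mpr (Set.range_subset_iff.mpr fun n => ?_)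
  induction n with
  | zero => exact hL.bottom_mem hc hS hS0 hLS
  | succ n ih => exact (S.smul_mem_iff (hb n)).mp (hA n ▸ hAS _ ih)

end Field

end IsDescendingLadder

section Euler

open MvPolynomial

variable {σ R : Type*} [CommSemiring R]

variable (σ R) in
/-- The Euler operator `∑ i, X i * ∂/∂X i`, encoded as the derivation fixing every variable. -/
def euler : Derivation R (MvPolynomial σ R) (MvPolynomial σ R) :=
  mkDerivation R X

theorem euler_X (i : σ) : euler σ R (X i) = X i :=
  mkDerivation_X R X i

theorem euler_apply [Fintype σ] (p : MvPolynomial σ R) :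
    euler σ R p = ∑ i : σ, X i * pderiv i p := by
  classical
  have hsum (q : MvPolynomial σ R) :
      (∑ i : σ, (X i : MvPolynomial σ R) • pderiv i) q = ∑ i : σ, X i * pderiv i q := by
    have h := congrFun (map_sum Derivation.coeFnAddMonoidHom
      (fun i : σ => (X i : MvPolynomial σ R) • pderiv (R := R) i) Finset.univ) q
    rwa [Finset.sum_apply] at h
  have heq : euler σ R = ∑ i : σ, (X i : MvPolynomial σ R) • pderiv i :=
    derivation_ext fun j => by simp [euler_X, hsum, pderiv_X, Pi.single_apply]
  rw [heq, hsum]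

theorem euler_apply_of_isHomogeneous [Finite σ] {p : MvPolynomial σ R} {r : ℕ}
    (hp : p.IsHomogeneous r) : euler σ R p = (r : R) • p := by
  have := Fintype.ofFinite σ
  rw [euler_apply, hp.sum_X_mul_pderiv, Nat.cast_smul_eq_nsmul]

theorem pderiv_euler (i : σ) (p : MvPolynomial σ R) :
    pderiv i (euler σ R p) = euler σ R (pderiv i p) + pderiv i p := by
  classical
  induction p using MvPolynomial.induction_on with
  | C a => simp only [derivation_C, map_zero, add_zero]
  | add p q hp hq =>
    simp only [map_add, hp, hq]
    ring
  | mul_X p j hp =>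
    have heuler : euler σ R (pderiv i (X j : MvPolynomial σ R)) = 0 := by
      rcases eq_or_ne i j with rfl | hij <;> simp [*]
    simp only [Derivation.leibniz, map_add, smul_eq_mul, euler_X, hp, heuler]
    ring

end Euler

section Laplacian

open MvPolynomial

variable {σ R : Type*} [Fintype σ] [CommSemiring R]

variable (σ R) in
/-- The squared norm `∑ i, X i ^ 2`; `p0 k` is the case `σ = Fin k`, `R = ℂ`. -/
def sumSq : MvPolynomial σ R :=
  ∑ i : σ, X i ^ 2

variable (σ R) in
/-- The Laplacian on polynomials as a linear map; `lap k` is, by definition, its underlying function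
for `σ = Fin k`, `R = ℂ`. -/
def laplacian : Module.End R (MvPolynomial σ R) where
  toFun p := ∑ i : σ, pderiv i (pderiv i p)
  map_add' p q := by simp only [map_add, Finset.sum_add_distrib]
  map_smul' a p := by simp only [Derivation.map_smul, Finset.smul_sum, RingHom.id_apply]

theorem laplacian_apply (p : MvPolynomial σ R) :
    laplacian σ R p = ∑ i : σ, pderiv i (pderiv i p) :=
  rfl

theorem laplacian_euler (p : MvPolynomial σ R) :
    laplacian σ R (euler σ R p) = euler σ R (laplacian σ R p) + (2 : R) • laplacian σ R p := by
  simp only [laplacian_apply, pderiv_euler, map_add, map_sum, Finset.sum_add_distrib]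
  module

theorem pderiv_sumSq (i : σ) : pderiv i (sumSq σ R) = 2 * X i := by
  classical
  simp [sumSq, pderiv_X, Pi.single_apply]

theorem euler_sumSq_mul (p : MvPolynomial σ R) :
    euler σ R (sumSq σ R * p) = sumSq σ R * euler σ R p + (2 : R) • (sumSq σ R * p) := by
  have hsumSq : euler σ R (sumSq σ R) = (2 : R) • sumSq σ R := by
    refine euler_apply_of_isHomogeneous (r := 2) ?_
    exact IsHomogeneous.sum _ _ _ fun i _ => isHomogeneous_X_pow i 2
  rw [Derivation.leibniz, hsumSq, smul_eq_mul, smul_eq_mul, mul_smul_comm, mul_comm p]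

theorem laplacian_sumSq_mul (p : MvPolynomial σ R) :
    laplacian σ R (sumSq σ R * p) =
      sumSq σ R * laplacian σ R p + (4 : R) • euler σ R p + (2 * Fintype.card σ : R) • p := by
  have hterm (i : σ) : pderiv i (pderiv i (sumSq σ R * p)) =
      sumSq σ R * pderiv i (pderiv i p) + (4 : R) • (X i * pderiv i p) + (2 : R) • p := by
    have htwo : pderiv i (2 : MvPolynomial σ R) = 0 := (pderiv i).map_natCast 2
    simp only [pderiv_mul, pderiv_sumSq, map_add, pderiv_X_self, htwo, smul_eq_C_mul, map_ofNat]
    ring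
  simp only [laplacian_apply, euler_apply, hterm, Finset.sum_add_distrib, ← Finset.mul_sum,
    ← Finset.smul_sum, Finset.sum_const, Finset.card_univ]
  module

end Laplacian

section Sl2

open MvPolynomial

attribute [local instance] LieRing.ofAssociativeRing

variable {σ K : Type*} [Fintype σ] [Field K]

variable (σ K) in
/-- The weight operator `-(E + k/2)`, with `E` the Euler operator and `k` the number of variables;
its sign makes the Laplacian, which lowers degrees, the `e` of the `sl₂`-triple. -/
def weightOp : Module.End K (MvPolynomial σ K) :=
  -((euler σ K).toLinearMap + (Fintype.card σ / 2 : K) • 1)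

theorem weightOp_apply (p : MvPolynomial σ K) :
    weightOp σ K p = -(euler σ K p + (Fintype.card σ / 2 : K) • p) :=
  rfl

variable (σ K) in
theorem isSl2Triple_laplacian_sumSq [Nonempty σ] [CharZero K] :
    IsSl2Triple (weightOp σ K) (-(1 / 4 : K) • laplacian σ K)
      (LinearMap.mulLeft K (sumSq σ K)) where
  h_ne_zero h := by simpa [weightOp_apply] using LinearMap.congr_fun h 1
  lie_e_f := by
    refine LinearMap.ext fun p => ?_
    simp only [LieRing.of_associative_ring_bracket, LinearMap.sub_apply, Module.End.mul_apply,
      LinearMap.smul_apply, LinearMap.mulLeft_apply, weightOp_apply, laplacian_sumSq_mul,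
      mul_smul_comm]
    module
  lie_h_e_nsmul := by
    refine LinearMap.ext fun p => ?_
    simp only [LieRing.of_associative_ring_bracket, LinearMap.sub_apply, Module.End.mul_apply,
      LinearMap.smul_apply, weightOp_apply, map_neg, map_add, map_smul, laplacian_euler]
    module
  lie_h_f_nsmul := by
    refine LinearMap.ext fun p => ?_
    simp only [LieRing.of_associative_ring_bracket, LinearMap.sub_apply, Module.End.mul_apply,
      LinearMap.neg_apply, LinearMap.smul_apply, LinearMap.mulLeft_apply, weightOp_apply,
      euler_sumSq_mul, mul_neg, mul_add, mul_smul_comm]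
    module

theorem hasPrimitiveVectorWith_of_laplacian_eq_zero [Nonempty σ] [CharZero K]
    {h : MvPolynomial σ K} {r : ℕ} (hne : h ≠ 0) (hhom : h.IsHomogeneous r)
    (hharm : laplacian σ K h = 0) :
    (isSl2Triple_laplacian_sumSq σ K).HasPrimitiveVectorWith h
      (-(r + Fintype.card σ / 2) : K) where
  ne_zero := hne
  lie_h := by
    rw [Module.End.lie_apply, weightOp_apply, euler_apply_of_isHomogeneous hhom]
    module
  lie_e := by rw [Module.End.lie_apply, LinearMap.smul_apply, hharm, smul_zero]

variable (σ K) in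
/-- The raising operator `X⁺`: half the multiplication by the squared norm. -/
def raising : Module.End K (MvPolynomial σ K) :=
  (1 / 2 : K) • LinearMap.mulLeft K (sumSq σ K)

variable (σ K) in
/-- The lowering operator `X⁻`: half the Laplacian. -/
def lowering : Module.End K (MvPolynomial σ K) :=
  (1 / 2 : K) • laplacian σ K

theorem raising_sumSq_pow_mul (h : MvPolynomial σ K) (j : ℕ) :
    raising σ K (sumSq σ K ^ j * h) = (1 / 2 : K) • (sumSq σ K ^ (j + 1) * h) := by
  rw [raising, LinearMap.smul_apply, LinearMap.mulLeft_apply, pow_succ', mul_assoc]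

theorem isDescendingLadder_lowering [Nonempty σ] [CharZero K] {h : MvPolynomial σ K} {r : ℕ}
    (hne : h ≠ 0) (hhom : h.IsHomogeneous r) (hharm : laplacian σ K h = 0) :
    IsDescendingLadder (lowering σ K) (fun j => (j + 1) * (Fintype.card σ + 2 * r + 2 * j))
      (fun j => sumSq σ K ^ j * h) where
  apply_zero := by rw [pow_zero, one_mul, lowering, LinearMap.smul_apply, hharm, smul_zero]
  apply_succ j := by
    have P := hasPrimitiveVectorWith_of_laplacian_eq_zero hne hhom hharm
    have hsl2 : -(1 / 4 : K) • laplacian σ K (sumSq σ K ^ (j + 1) * h) =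
        ((j + 1) * (-(r + Fintype.card σ / 2) - j) : K) • (sumSq σ K ^ j * h) := by
      simpa only [LieModule.toEnd_module_end, LieHom.id_apply, LinearMap.pow_mulLeft,
        LinearMap.mulLeft_apply, Module.End.lie_apply, LinearMap.smul_apply]
        using P.lie_e_pow_succ_toEnd_f j
    calc lowering σ K (sumSq σ K ^ (j + 1) * h)
        = (-2 : K) • -(1 / 4 : K) • laplacian σ K (sumSq σ K ^ (j + 1) * h) := by
          rw [lowering, LinearMap.smul_apply]
          module
      _ = ((j + 1) * (Fintype.card σ + 2 * r + 2 * j) : K) • (sumSq σ K ^ j * h) := by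
          rw [hsl2]
          module

theorem raising_mem_span {h p : MvPolynomial σ K}
    (hp : p ∈ Submodule.span K (Set.range fun j : ℕ => sumSq σ K ^ j * h)) :
    raising σ K p ∈ Submodule.span K (Set.range fun j : ℕ => sumSq σ K ^ j * h) := by
  refine apply_mem_span_range_of_forall (fun j => ?_) hp
  rw [raising_sumSq_pow_mul]
  exact Submodule.smul_mem _ _ (Submodule.subset_span (Set.mem_range_self (j + 1)))

theorem Jh_irreducible_general [Nonempty σ] [CharZero K] {h : MvPolynomial σ K} {r : ℕ}
    (hne : h ≠ 0) (hhom : h.IsHomogeneous r) (hharm : laplacian σ K h = 0) :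
    LinearIndependent K (fun j : ℕ => sumSq σ K ^ j * h) ∧
    (∀ p ∈ Submodule.span K (Set.range fun j : ℕ => sumSq σ K ^ j * h),
      raising σ K p ∈ Submodule.span K (Set.range fun j : ℕ => sumSq σ K ^ j * h) ∧
      lowering σ K p ∈ Submodule.span K (Set.range fun j : ℕ => sumSq σ K ^ j * h)) ∧
    (∀ S : Submodule K (MvPolynomial σ K),
      S ≤ Submodule.span K (Set.range fun j : ℕ => sumSq σ K ^ j * h) →
      (∀ p ∈ S, raising σ K p ∈ S) → (∀ p ∈ S, lowering σ K p ∈ S) →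
      S = ⊥ ∨ S = Submodule.span K (Set.range fun j : ℕ => sumSq σ K ^ j * h)) := by
  have hladder := isDescendingLadder_lowering hne hhom hharm
  have hcoeff (j : ℕ) : ((j + 1) * (Fintype.card σ + 2 * r + 2 * j) : K) ≠ 0 := by
    have hpos : (j + 1) * (Fintype.card σ + 2 * r + 2 * j) ≠ 0 := by positivity
    exact_mod_cast hpos
  have hhalf : (1 / 2 : K) ≠ 0 := by norm_num
  refine ⟨hladder.linearIndependent hcoeff ?_, fun p hp => ?_, fun S hS hplus hminus => ?_⟩
  · simpa only [pow_zero, one_mul] using hne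
  · exact ⟨raising_mem_span hp, hladder.apply_mem_span hp⟩
  · exact hladder.eq_bot_or_eq_span hcoeff (fun _ => hhalf) (raising_sumSq_pow_mul h)
      hS hplus hminus

end Sl2

theorem Jh_irreducible (k r : ℕ) (hk : 0 < k) (h : MvPolynomial (Fin k) ℂ)
    (hne : h ≠ 0) (hhom : h.IsHomogeneous r) (hharm : lap k h = 0) :
    LinearIndependent ℂ (fun j : ℕ => p0 k ^ j * h) ∧
    (∀ p ∈ Jspan k h, Xplus k p ∈ Jspan k h ∧ Xminus k p ∈ Jspan k h) ∧
    (∀ S : Submodule ℂ (MvPolynomial (Fin k) ℂ), S ≤ Jspan k h →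
      (∀ p ∈ S, Xplus k p ∈ S) → (∀ p ∈ S, Xminus k p ∈ S) →
      S = ⊥ ∨ S = Jspan k h) := by
  have : Nonempty (Fin k) := Fin.pos_iff_nonempty.mp hk
  exact Jh_irreducible_general hne hhom hharm

end
end

section
/- Call a polynomial $p$ on $\mathbb{C}^{n\times k}$ $H$-harmonic if $\triangle_{\alpha\beta}p=0$ for all $1\le\alpha,\beta\le n$, where $\triangle_{\alpha\beta}=\sum_{i=1}^k\partial^2/\partial Z_{\alpha i}\partial Z_{\beta i}$. Let $E_{\alpha\beta}=\sum_{i=1}^k Z_{\alpha i}\,\partial/\partial Z_{\beta i}+\tfrac12 k\,\delta_{\alpha\beta}$. Then for every $H$-harmonic polynomial $p$ and all $\alpha,\beta\in\{1,\dots,n\}$, the polynomial $E_{\alpha\beta}\,p$ is again $H$-harmonic; i.e., the operators $E_{\alpha\beta}$ preserve the space of $H$-harmonic polynomials on $\mathbb{C}^{n\times k}$. -/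
/-!
Statement 17: The operators `E_{αβ} = ∑ i, Z_{αi} ∂/∂Z_{βi} + ½ k δ_{αβ}` preserve the space of
`H`-harmonic polynomials on `ℂ^{n×k}` (those annihilated by all Laplacians
`Δ_{αβ} = ∑ i, ∂²/∂Z_{αi}∂Z_{βi}`).
-/

noncomputable section

/-- The partial derivative `∂/∂Z v` as an endomorphism of polynomials on `ℂ^{n×k}`. -/
def pd (n k : ℕ) (v : Fin n × Fin k) : Module.End ℂ (MvPolynomial (Fin n × Fin k) ℂ) :=
  (MvPolynomial.pderiv v).toLinearMap

/-- `E_{αβ} = ∑ i, Z_{αi} ∂/∂Z_{βi} + ½ k δ_{αβ}`. -/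
def Eop (n k : ℕ) (α β : Fin n) : Module.End ℂ (MvPolynomial (Fin n × Fin k) ℂ) :=
  (∑ i : Fin k, LinearMap.mulLeft ℂ (MvPolynomial.X (α, i)) * pd n k (β, i)) +
    (if α = β then (k : ℂ) / 2 else 0) • (1 : Module.End ℂ (MvPolynomial (Fin n × Fin k) ℂ))

/-- The Laplacian `Δ_{αβ} = ∑ i, ∂²/∂Z_{αi}∂Z_{βi}`. -/
def Dop (n k : ℕ) (α β : Fin n) : Module.End ℂ (MvPolynomial (Fin n × Fin k) ℂ) :=
  ∑ i : Fin k, pd n k (α, i) * pd n k (β, i)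

/-!
On coordinate functions one computes `[∂_{γj}, E_{αβ}] = δ_{αγ} ∂_{βj}`, and both sides are
derivations, so the identity holds on all polynomials. Hence
`[Δ_{γδ}, E_{αβ}] = δ_{αγ} Δ_{βδ} + δ_{αδ} Δ_{γβ}`: the commutators of the `E_{αβ}` with the
Laplacians are again combinations of Laplacians, and these vanish on harmonic polynomials.
-/

open MvPolynomial

section

variable {R ι κ : Type*} [CommRing R] [Fintype κ]

/-- The polarization operator `∑ i, Z_{αi} ∂/∂Z_{βi}`, as a derivation of the polynomial ring in
the entries of a matrix `Z` with rows indexed by `ι` and columns indexed by `κ`. It is the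
first-order part of `E_{αβ}`. -/
def polarization (α β : ι) :
    Derivation R (MvPolynomial (ι × κ) R) (MvPolynomial (ι × κ) R) :=
  ∑ i, (X (α, i) : MvPolynomial (ι × κ) R) • pderiv (β, i)

/-- The mixed Laplacian `∑ i, ∂²/∂Z_{αi}∂Z_{βi}` on polynomials in the entries of a matrix `Z`
with rows indexed by `ι` and columns indexed by `κ`; it specializes to `Δ_{αβ}`. -/
def mixedLaplacian (α β : ι) : Module.End R (MvPolynomial (ι × κ) R) :=
  ∑ i, (pderiv (α, i)).toLinearMap * (pderiv (β, i)).toLinearMap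

variable (R ι κ) in
/-- The space of `H`-harmonic polynomials: those annihilated by all mixed Laplacians. -/
def harmonicSubmodule : Submodule R (MvPolynomial (ι × κ) R) :=
  ⨅ (α : ι) (β : ι), LinearMap.ker (mixedLaplacian α β)

lemma polarization_apply (α β : ι) (p : MvPolynomial (ι × κ) R) :
    polarization α β p = ∑ i, X (α, i) * pderiv (β, i) p := by
  rw [polarization, ← Derivation.coeFnAddMonoidHom_apply, map_sum, Finset.sum_apply]
  rfl

lemma mixedLaplacian_apply (α β : ι) (p : MvPolynomial (ι × κ) R) :
    mixedLaplacian α β p = ∑ i, pderiv (α, i) (pderiv (β, i) p) := by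
  simp [mixedLaplacian]

lemma mem_harmonicSubmodule {p : MvPolynomial (ι × κ) R} :
    p ∈ harmonicSubmodule R ι κ ↔ ∀ α β, mixedLaplacian α β p = 0 := by
  simp [harmonicSubmodule]

lemma polarization_X [DecidableEq ι] (α β γ : ι) (j : κ) :
    polarization α β (X (γ, j) : MvPolynomial (ι × κ) R) = if γ = β then X (α, j) else 0 := by
  classical
  simp [polarization_apply, pderiv_X, Pi.single_apply, ite_and]

lemma lie_pderiv_polarization [DecidableEq ι] (α β γ : ι) (j : κ) :
    ⁅pderiv (R := R) (γ, j), polarization α β⁆ =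
      if α = γ then pderiv (R := R) (β, j) else 0 := by
  classical
  apply derivation_ext
  rintro ⟨ε, l⟩
  have polarization_pderiv_X :
      polarization α β (pderiv (γ, j) (X (ε, l) : MvPolynomial (ι × κ) R)) = 0 := by
    simp [pderiv_X, Pi.single_apply, apply_ite]
  rw [Derivation.commutator_apply, polarization_pderiv_X, sub_zero, polarization_X]
  split_ifs <;> simp_all [pderiv_X, Pi.single_apply]

lemma pderiv_polarization [DecidableEq ι] (α β γ : ι) (j : κ) (p : MvPolynomial (ι × κ) R) :
    pderiv (γ, j) (polarization α β p) =
      polarization α β (pderiv (γ, j) p) + if α = γ then pderiv (β, j) p else 0 := by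
  rw [← sub_eq_iff_eq_add', ← Derivation.commutator_apply, lie_pderiv_polarization]
  split_ifs <;> rfl

lemma mixedLaplacian_polarization [DecidableEq ι] (α β γ δ : ι) (p : MvPolynomial (ι × κ) R) :
    mixedLaplacian γ δ (polarization α β p) =
      polarization α β (mixedLaplacian γ δ p) +
        ((if α = γ then mixedLaplacian β δ p else 0) +
          if α = δ then mixedLaplacian γ β p else 0) := by
  simp only [mixedLaplacian_apply, pderiv_polarization, map_add, map_sum, apply_ite (pderiv _),
    map_zero, Finset.sum_add_distrib, add_assoc]
  split_ifs <;> simp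

lemma polarization_mem_harmonicSubmodule (α β : ι) {p : MvPolynomial (ι × κ) R}
    (hp : p ∈ harmonicSubmodule R ι κ) : polarization α β p ∈ harmonicSubmodule R ι κ := by
  classical
  rw [mem_harmonicSubmodule] at hp ⊢
  intro γ δ
  simp [mixedLaplacian_polarization, hp]

theorem Eop_preserves_harmonics_general (α β : ι) (c : R) {p : MvPolynomial (ι × κ) R}
    (hp : p ∈ harmonicSubmodule R ι κ) :
    polarization α β p + c • p ∈ harmonicSubmodule R ι κ :=
  add_mem (polarization_mem_harmonicSubmodule α β hp) (Submodule.smul_mem _ c hp)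

end

lemma Dop_eq_mixedLaplacian (n k : ℕ) (α β : Fin n) : Dop n k α β = mixedLaplacian α β :=
  rfl

lemma Eop_apply (n k : ℕ) (α β : Fin n) (p : MvPolynomial (Fin n × Fin k) ℂ) :
    Eop n k α β p = polarization α β p + (if α = β then (k : ℂ) / 2 else 0) • p := by
  simp only [Eop, pd, polarization_apply, LinearMap.add_apply, LinearMap.sum_apply,
    LinearMap.smul_apply, Module.End.mul_apply, Module.End.one_apply, LinearMap.mulLeft_apply,
    Derivation.coeFn_coe]

theorem Eop_preserves_harmonics (n k : ℕ) (p : MvPolynomial (Fin n × Fin k) ℂ)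
    (hp : ∀ α β : Fin n, Dop n k α β p = 0) :
    ∀ α β γ δ : Fin n, Dop n k γ δ (Eop n k α β p) = 0 := by
  intro α β γ δ
  simp only [Dop_eq_mixedLaplacian, Eop_apply, ← mem_harmonicSubmodule] at hp ⊢
  exact mem_harmonicSubmodule.1 (Eop_preserves_harmonics_general α β _ hp) γ δ

end
end
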